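/- Let R be a commutative Noetherian ring, let I be an ideal, let d be a non-negative integer such that H_I^j(R) = 0 for all j < d, and let q be a prime ideal of R containing I. Then Γ_q(H_I^d(R)) ≅ H_q^d(R), i.e., the q-torsion submodule of H_I^d(R) is isomorphic to the d-th local cohomology of R with support in q. -/

import Mathlib

open CategoryTheory Opposite
noncomputable section

/-- The underlying module of the `i`-th local cohomology of `R` with support in `I`. -/
abbrev LocalCohomologyMod (R : Type) [CommRing R] (I : Ideal R) (i : ℕ) : Type :=
  (localCohomology I i).obj (ModuleCat.of R R)

/-- The `J`-torsion submodule `Γ_J(M) = {m ∈ M | J^k m = 0 for some k}`. -/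
def torsionSubmodule (R : Type) [CommRing R] (J : Ideal R)
    (M : Type) [AddCommGroup M] [Module R M] : Submodule R M :=
  ⨆ k : ℕ, Submodule.torsionBySet R M ((J ^ k : Ideal R) : Set R)

namespace LCproof
open Limits
universe v u w₂ w₃
section LES
set_option linter.unusedSectionVars false
variable {C : Type u} [Category.{v} C] [Abelian C] [EnoughProjectives C]
  {D : Type w₃} [Category.{w₂} D] [Abelian D]
variable {F G H : C ⥤ D} [F.Additive] [G.Additive] [H.Additive]
  (α : F ⟶ G) (β : G ⟶ H)

/-- The short complex of chain complexes obtained from a chain complex. -/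
def sc (w : α ≫ β = 0) (K : ChainComplex C ℕ) : ShortComplex (ChainComplex D ℕ) :=
  ShortComplex.mk ((NatTrans.mapHomologicalComplex α _).app K)
    ((NatTrans.mapHomologicalComplex β _).app K) (by
      ext i
      exact congr_app w (K.X i))

/-- Functoriality of `sc`. -/
def scMap (w : α ≫ β = 0) {K L : ChainComplex C ℕ} (f : K ⟶ L) : sc α β w K ⟶ sc α β w L where
  τ₁ := (F.mapHomologicalComplex _).map f
  τ₂ := (G.mapHomologicalComplex _).map f
  τ₃ := (H.mapHomologicalComplex _).map f
  comm₁₂ := ((NatTrans.mapHomologicalComplex α _).naturality f)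
  comm₂₃ := ((NatTrans.mapHomologicalComplex β _).naturality f)

variable (w : α ≫ β = 0) (hs : ∀ (X : C) [Projective X], (ShortComplex.mk (α.app X) (β.app X)
  (congr_app w X)).ShortExact)

lemma sc_shortExact (hs : ∀ (X : C) [Projective X], (ShortComplex.mk (α.app X) (β.app X)
    (congr_app w X)).ShortExact) {X : C} (P : ProjectiveResolution X) : (sc α β w P.complex).ShortExact := by
  apply HomologicalComplex.shortExact_of_degreewise_shortExact
  intro i
  exact hs (P.complex.X i)

/-- delta computed on a resolution -/
def deltaP (n : ℕ) {X : C} (P : ProjectiveResolution X) :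
    (HomologicalComplex.homologyFunctor D _ (n+1)).obj
        ((H.mapHomologicalComplex _).obj P.complex) ⟶
    (HomologicalComplex.homologyFunctor D _ n).obj
        ((F.mapHomologicalComplex _).obj P.complex) :=
  (sc_shortExact α β w hs P).δ (n+1) n (by simp)

/-- The connecting map. -/
def delta (n : ℕ) : H.leftDerived (n+1) ⟶ F.leftDerived n where
  app X := ((projectiveResolution X).isoLeftDerivedObj H (n+1)).hom ≫
    deltaP α β w hs n (projectiveResolution X) ≫
    ((projectiveResolution X).isoLeftDerivedObj F n).inv
  naturality {X Y} f := by
    have h := HomologicalComplex.HomologySequence.δ_naturality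
      (scMap α β w (ProjectiveResolution.lift f (projectiveResolution X) (projectiveResolution Y)))
      (sc_shortExact α β w hs (projectiveResolution X))
      (sc_shortExact α β w hs (projectiveResolution Y)) (n+1) n (by simp)
    have h1 := ProjectiveResolution.isoLeftDerivedObj_hom_naturality f
      (projectiveResolution X) (projectiveResolution Y)
      (ProjectiveResolution.lift f (projectiveResolution X) (projectiveResolution Y)) (ProjectiveResolution.lift_commutes_zero _ _ _) H (n+1)
    have h2 := ProjectiveResolution.isoLeftDerivedObj_inv_naturality f
      (projectiveResolution X) (projectiveResolution Y)
      (ProjectiveResolution.lift f (projectiveResolution X) (projectiveResolution Y)) (ProjectiveResolution.lift_commutes_zero _ _ _) F n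
    have h' : (H.mapHomologicalComplex _ ⋙ HomologicalComplex.homologyFunctor _ _ (n+1)).map
        (ProjectiveResolution.lift f (projectiveResolution X) (projectiveResolution Y)) ≫
        deltaP α β w hs n (projectiveResolution Y) =
        deltaP α β w hs n (projectiveResolution X) ≫
        (F.mapHomologicalComplex _ ⋙ HomologicalComplex.homologyFunctor _ _ n).map
        (ProjectiveResolution.lift f (projectiveResolution X) (projectiveResolution Y)) := h.symm
    rw [reassoc_of% h1, Category.assoc, Category.assoc, h2, reassoc_of% h']
    rfl

lemma delta_exact1 (n : ℕ) (X : C) : ∃ h,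
    (ShortComplex.mk ((delta α β w hs n).app X) ((NatTrans.leftDerived α n).app X) h).Exact := by
  let P := projectiveResolution X
  have hz : deltaP α β w hs n P ≫ (HomologicalComplex.homologyFunctor D (ComplexShape.down ℕ) n).map
        ((NatTrans.mapHomologicalComplex α _).app P.complex) = 0 :=
    (sc_shortExact α β w hs P).δ_comp (n+1) n (by simp)
  have hex : (ShortComplex.mk _ _ hz).Exact :=
    (sc_shortExact α β w hs P).homology_exact₁ (n+1) n (by simp)
  have h0 : (delta α β w hs n).app X ≫ (NatTrans.leftDerived α n).app X = 0 := by
    rw [ProjectiveResolution.leftDerived_app_eq α P]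
    simp only [delta, Category.assoc]
    rw [Iso.inv_hom_id_assoc, reassoc_of% hz]
    simp
  refine ⟨h0, ShortComplex.exact_of_iso (ShortComplex.isoMk (P.isoLeftDerivedObj H (n+1)).symm
    (P.isoLeftDerivedObj F n).symm (P.isoLeftDerivedObj G n).symm ?_ ?_) hex⟩
  · simp [delta, P]
  · simp [ProjectiveResolution.leftDerived_app_eq α P]

lemma delta_exact2 (n : ℕ) (X : C) : ∃ h,
    (ShortComplex.mk ((NatTrans.leftDerived β (n+1)).app X) ((delta α β w hs n).app X) h).Exact := by
  let P := projectiveResolution X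
  have hz : (HomologicalComplex.homologyFunctor D (ComplexShape.down ℕ) (n+1)).map
        ((NatTrans.mapHomologicalComplex β _).app P.complex) ≫ deltaP α β w hs n P = 0 :=
    (sc_shortExact α β w hs P).comp_δ (n+1) n (by simp)
  have hex : (ShortComplex.mk _ _ hz).Exact :=
    (sc_shortExact α β w hs P).homology_exact₃ (n+1) n (by simp)
  have h0 : (NatTrans.leftDerived β (n+1)).app X ≫ (delta α β w hs n).app X = 0 := by
    rw [ProjectiveResolution.leftDerived_app_eq β P]
    simp only [delta, Category.assoc]
    rw [Iso.inv_hom_id_assoc, reassoc_of% hz]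
    simp
  refine ⟨h0, ShortComplex.exact_of_iso (ShortComplex.isoMk (P.isoLeftDerivedObj G (n+1)).symm
    (P.isoLeftDerivedObj H (n+1)).symm (P.isoLeftDerivedObj F n).symm ?_ ?_) hex⟩
  · simp [ProjectiveResolution.leftDerived_app_eq β P]
  · simp [delta, P]

/-- A natural endomorphism of the identity commutes with homology. -/
lemma homologyMap_center (z : 𝟭 D ⟶ 𝟭 D) (K : ChainComplex D ℕ) (f : K ⟶ K)
    (hf : ∀ i, f.f i = z.app (K.X i)) (n : ℕ) :
    HomologicalComplex.homologyMap f n = z.app (K.homology n) := by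
  rw [← cancel_epi (K.homologyπ n), HomologicalComplex.homologyπ_naturality]
  have h1 : HomologicalComplex.cyclesMap f n = z.app (K.cycles n) := by
    rw [← cancel_mono (K.iCycles n), HomologicalComplex.cyclesMap_i, hf]
    exact z.naturality (K.iCycles n)
  rw [h1]
  exact (z.naturality (K.homologyπ n)).symm

lemma leftDerived_center (z : 𝟭 D ⟶ 𝟭 D) (γ : F ⟶ F) (hγ : ∀ X, γ.app X = z.app (F.obj X))
    (n : ℕ) (X : C) : (NatTrans.leftDerived γ n).app X = z.app ((F.leftDerived n).obj X) := by
  rw [ProjectiveResolution.leftDerived_app_eq γ (projectiveResolution X)]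
  have := homologyMap_center z _ ((NatTrans.mapHomologicalComplex γ (ComplexShape.down ℕ)).app
    (projectiveResolution X).complex) (fun i => hγ _) n
  rw [HomologicalComplex.homologyFunctor_map, this]
  have h2 := z.naturality ((projectiveResolution X).isoLeftDerivedObj F n).inv
  refine (congrArg (fun t => ((projectiveResolution X).isoLeftDerivedObj F n).hom ≫ t)
    h2.symm).trans ?_
  exact Iso.hom_inv_id_assoc _ _

lemma leftDerived_map_center (z : 𝟭 D ⟶ 𝟭 D) (y : 𝟭 C ⟶ 𝟭 C)
    (hγ : ∀ X, F.map (y.app X) = z.app (F.obj X))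
    (n : ℕ) (X : C) : (F.leftDerived n).map (y.app X) = z.app ((F.leftDerived n).obj X) := by
  let P := (projectiveResolution X)
  let φ : P.complex ⟶ P.complex := { f := fun i => y.app _, comm' := fun i j _ =>
    (y.naturality (P.complex.d i j)).symm }
  have h1 := ProjectiveResolution.isoLeftDerivedObj_hom_naturality (y.app X) P P φ
    (by exact (y.naturality (P.π.f 0)).symm) F n
  rw [← cancel_mono (P.isoLeftDerivedObj F n).hom, h1]
  have := homologyMap_center z _ ((F.mapHomologicalComplex _).map φ) (fun i => hγ _) n
  rw [Functor.comp_map, HomologicalComplex.homologyFunctor_map, this]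
  exact z.naturality ((projectiveResolution X).isoLeftDerivedObj F n).hom

lemma leftDerived_add (γ δ ε : F ⟶ G) (h : ∀ X, ε.app X = γ.app X + δ.app X) (n : ℕ) (X : C) :
    (NatTrans.leftDerived ε n).app X =
      (NatTrans.leftDerived γ n).app X + (NatTrans.leftDerived δ n).app X := by
  simp only [ProjectiveResolution.leftDerived_app_eq _ (projectiveResolution X)]
  have : (NatTrans.mapHomologicalComplex ε (ComplexShape.down ℕ)).app
      (projectiveResolution X).complex = (NatTrans.mapHomologicalComplex γ _).app _ +
      (NatTrans.mapHomologicalComplex δ _).app _ := by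
    ext i; exact h _
  rw [this, Functor.map_add, Preadditive.add_comp, Preadditive.comp_add]

end LES
section ExtPart
variable {R : Type} [CommRing R]

/-- The functor `Hom(-, Y)` with values in the opposite category. -/
abbrev HY (Y : ModuleCat.{0} R) : ModuleCat.{0} R ⥤ (ModuleCat.{0} R)ᵒᵖ :=
  ((linearYoneda R (ModuleCat.{0} R)).obj Y).rightOp

/-- postcomposition -/
abbrev HYmap {Y Z : ModuleCat.{0} R} (f : Y ⟶ Z) : HY Z ⟶ HY Y :=
  NatTrans.rightOp ((linearYoneda R (ModuleCat.{0} R)).map f)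

variable (S : ShortComplex (ModuleCat.{0} R)) (hS : S.ShortExact)

lemma HYzero : HYmap S.g ≫ HYmap S.f = 0 := by
  ext X
  apply Quiver.Hom.unop_inj
  ext φ
  have key : ∀ ψ : X ⟶ S.X₁, (ψ ≫ S.f) ≫ S.g = 0 := fun ψ => by simp
  exact key φ

lemma HYexact (hS : S.ShortExact) (X : ModuleCat.{0} R) [Projective X] :
    (ShortComplex.mk ((HYmap S.g).app X) ((HYmap S.f).app X) (congr_app (HYzero S) X)).ShortExact := by
  have := hS.mono_f
  have := hS.epi_g
  have hz : (((linearYoneda R (ModuleCat.{0} R)).map S.f).app (op X)) ≫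
    (((linearYoneda R (ModuleCat.{0} R)).map S.g).app (op X)) = 0 := by
    ext φ
    have key : ∀ ψ : X ⟶ S.X₁, (ψ ≫ S.f) ≫ S.g = 0 := fun ψ => by simp
    exact key φ
  have : (ShortComplex.mk _ _ hz).ShortExact := by
    refine ShortComplex.ShortExact.mk' ?_ ?_ ?_
    · rw [ShortComplex.moduleCat_exact_iff]
      intro φ hφ
      change X ⟶ S.X₂ at φ
      change φ ≫ S.g = 0 at hφ
      exact ⟨hS.exact.lift φ hφ, hS.exact.lift_f φ hφ⟩
    · rw [ModuleCat.mono_iff_injective]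
      intro φ ψ h
      exact (cancel_mono S.f).1 (by exact h)
    · rw [ModuleCat.epi_iff_surjective]
      intro (φ : X ⟶ S.X₃)
      exact ⟨Projective.factorThru φ S.g, Projective.factorThru_comp φ S.g⟩
  exact this.op

/-- Ext of a fixed second variable -/
abbrev EX (n : ℕ) (Y : ModuleCat.{0} R) : (ModuleCat.{0} R)ᵒᵖ ⥤ ModuleCat.{0} R :=
  (Ext R (ModuleCat.{0} R) n).flip.obj Y

/-- connecting map for Ext -/
def extDelta (n : ℕ) : EX n S.X₃ ⟶ EX (n+1) S.X₁ :=
  NatTrans.leftOp (delta (HYmap S.g) (HYmap S.f) (HYzero S) (fun X _ => HYexact S hS X) n)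

lemma extDelta_exact1 (n : ℕ) (X : (ModuleCat.{0} R)ᵒᵖ) (x : (EX n S.X₃).obj X)
    (hx : (extDelta S hS n).app X x = 0) :
    ∃ y, ((Ext R (ModuleCat.{0} R) n).flip.map S.g).app X y = x := by
  obtain ⟨h, h'⟩ := delta_exact1 (HYmap S.g) (HYmap S.f) (HYzero S) (fun X _ => HYexact S hS X) n X.unop
  have := h'.unop
  rw [ShortComplex.moduleCat_exact_iff] at this
  exact this x hx

lemma extDelta_exact2 (n : ℕ) (X : (ModuleCat.{0} R)ᵒᵖ) (x : (EX (n+1) S.X₁).obj X)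
    (hx : ((Ext R (ModuleCat.{0} R) (n+1)).flip.map S.f).app X x = 0) :
    ∃ y, (extDelta S hS n).app X y = x := by
  obtain ⟨h, h'⟩ := delta_exact2 (HYmap S.g) (HYmap S.f) (HYzero S) (fun X _ => HYexact S hS X) n X.unop
  have := h'.unop
  rw [ShortComplex.moduleCat_exact_iff] at this
  exact this x hx

/-- multiplication by a scalar as endomorphism of the identity. -/
def mulC (r : R) : 𝟭 (ModuleCat.{0} R) ⟶ 𝟭 (ModuleCat.{0} R) where
  app X := r • 𝟙 X

/-- multiplication by a scalar as endomorphism of the identity. -/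
def mulO (r : R) : 𝟭 (ModuleCat.{0} R)ᵒᵖ ⟶ 𝟭 (ModuleCat.{0} R)ᵒᵖ where
  app X := (r • 𝟙 X.unop).op
  naturality {X Y} f := by
    apply Quiver.Hom.unop_inj
    simp

lemma ext_smul_right (n : ℕ) (r : R) (X : (ModuleCat.{0} R)ᵒᵖ) (Y : ModuleCat.{0} R)
    (x : (EX n Y).obj X) :
    ((Ext R (ModuleCat.{0} R) n).flip.map (r • 𝟙 Y)).app X x = r • x := by
  have := leftDerived_center (mulO r) (HYmap (r • 𝟙 Y)) (fun Z => by
    apply Quiver.Hom.unop_inj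
    ext φ
    have key : ∀ ψ : Z ⟶ Y, ψ ≫ (r • 𝟙 Y) = r • ψ := fun ψ => by simp
    exact key φ) n X.unop
  exact congrArg (fun f => f.unop x) this

lemma ext_smul_left (n : ℕ) (r : R) (X : (ModuleCat.{0} R)ᵒᵖ) (Y : ModuleCat.{0} R)
    (x : (EX n Y).obj X) (hr : r • 𝟙 X.unop = 0) : r • x = 0 := by
  have h1 := fun s : R => leftDerived_map_center (F := HY Y) (mulO s) (mulC s) (fun Z => by
    apply Quiver.Hom.unop_inj
    ext φ
    have key : ∀ ψ : Z ⟶ Y, (s • 𝟙 Z) ≫ ψ = s • ψ := fun ψ => by simp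
    exact key φ) n X.unop
  have h2 : (mulC r).app X.unop = (mulC 0).app X.unop := by
    change r • 𝟙 X.unop = (0 : R) • 𝟙 X.unop
    rw [hr, zero_smul]
  have h3 := (h1 r).symm.trans ((congrArg _ h2).trans (h1 0))
  have h4 : r • x = (0 : R) • x := congrArg (fun f => f.unop x) h3
  rw [h4, zero_smul]

lemma ext_add (n : ℕ) (X : (ModuleCat.{0} R)ᵒᵖ) {Y Z : ModuleCat.{0} R} (f g : Y ⟶ Z)
    (x : (EX n Y).obj X) :
    ((Ext R (ModuleCat.{0} R) n).flip.map (f + g)).app X x =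
     ((Ext R (ModuleCat.{0} R) n).flip.map f).app X x +
     ((Ext R (ModuleCat.{0} R) n).flip.map g).app X x := by
  have := leftDerived_add (HYmap f) (HYmap g) (HYmap (f + g)) (fun W => by
    apply Quiver.Hom.unop_inj
    ext φ
    have key : ∀ ψ : W ⟶ Y, ψ ≫ (f + g) = ψ ≫ f + ψ ≫ g := fun ψ => by simp
    exact key φ) n X.unop
  exact congrArg (fun f => f.unop x) this

instance (Y : ModuleCat.{0} R) : PreservesFiniteColimits (HY Y) := by
  have : PreservesLimits ((linearYoneda R (ModuleCat.{0} R)).obj Y) := by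
    have : PreservesLimits ((linearYoneda R (ModuleCat.{0} R)).obj Y ⋙ forget _) :=
      inferInstanceAs (PreservesLimits (yoneda.obj Y))
    exact preservesLimits_of_reflects_of_preserves _ (forget _)
  exact preservesFiniteColimits_rightOp _

/-- Ext 0 is Hom -/
def extZero (Y : ModuleCat.{0} R) : (linearYoneda R (ModuleCat.{0} R)).obj Y ⟶ EX 0 Y :=
  NatTrans.leftOp (HY Y).leftDerivedZeroIsoSelf.hom

instance (Y : ModuleCat.{0} R) (X) : IsIso ((extZero Y).app X) := by
  have : IsIso ((HY Y).leftDerivedZeroIsoSelf.hom.app X.unop) := inferInstance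
  exact inferInstanceAs (IsIso ((HY Y).leftDerivedZeroIsoSelf.hom.app X.unop).unop)

end ExtPart
section Colim
variable {R : Type} [CommRing R]

lemma colim_surj {A : ℕᵒᵖᵒᵖ ⥤ ModuleCat.{0} R} {c : Cocone A} (hc : IsColimit c) (x : c.pt) :
    ∃ t, ∃ y : A.obj t, c.ι.app t y = x :=
  Concrete.isColimit_exists_rep A hc x

lemma colim_zero {A : ℕᵒᵖᵒᵖ ⥤ ModuleCat.{0} R} {c : Cocone A} (hc : IsColimit c) (t)
    (x : A.obj t) (hx : c.ι.app t x = 0) : ∃ s, ∃ f : t ⟶ s, A.map f x = 0 := by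
  have : c.ι.app t x = c.ι.app t 0 := by rw [hx, map_zero]
  obtain ⟨s, f, g, h⟩ := (Concrete.isColimit_rep_eq_iff_exists A hc x 0).1 this
  exact ⟨s, f, by rw [h, map_zero]⟩

lemma colim_iso {A B C D : ℕᵒᵖᵒᵖ ⥤ ModuleCat.{0} R} {a : Cocone A} {b : Cocone B} {c : Cocone C}
    {d : Cocone D} (ha : IsColimit a) (hb : IsColimit b) (hc : IsColimit c) (hd : IsColimit d)
    (f : A ⟶ B) (g : B ⟶ C) (h : C ⟶ D)
    (h1 : ∀ t (x : B.obj t), g.app t x = 0 → ∃ y, f.app t y = x)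
    (h2 : ∀ t (x : C.obj t), h.app t x = 0 → ∃ y, g.app t y = x)
    (h3 : Subsingleton a.pt) (h4 : Subsingleton d.pt) : Nonempty (b.pt ≃ₗ[R] c.pt) := by
  let G : b.pt ⟶ c.pt := hb.map c g
  have hG : ∀ t x, G (b.ι.app t x) = c.ι.app t (g.app t x) := fun t x =>
    congrArg (fun φ => φ.hom x) (hb.ι_map c g t)
  let F : a.pt ⟶ b.pt := ha.map b f
  have hF : ∀ t x, F (a.ι.app t x) = b.ι.app t (f.app t x) := fun t x =>
    congrArg (fun φ => φ.hom x) (ha.ι_map b f t)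
  refine ⟨LinearEquiv.ofBijective G.hom ⟨?_, ?_⟩⟩
  · rw [injective_iff_map_eq_zero]
    intro x hx
    obtain ⟨t, x, rfl⟩ := colim_surj hb x
    obtain ⟨s, i, hs⟩ := colim_zero hc t (g.app t x) ((hG t x).symm.trans hx)
    have hs' : g.app s (B.map i x) = 0 :=
      (congrArg (fun φ => φ.hom x) (g.naturality i)).trans hs
    obtain ⟨y, hy⟩ := h1 s _ hs'
    have e : b.ι.app s (B.map i x) = b.ι.app t x := congrArg (fun φ => φ.hom x) (b.w i)
    rw [← e, ← hy, ← hF, show a.ι.app s y = 0 from h3.elim _ _, map_zero]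
  · intro x
    obtain ⟨t, x, rfl⟩ := colim_surj hc x
    obtain ⟨s, i, hs⟩ := colim_zero hd t (h.app t x) (h4.elim _ _)
    have hs' : h.app s (C.map i x) = 0 :=
      (congrArg (fun φ => φ.hom x) (h.naturality i)).trans hs
    obtain ⟨y, hy⟩ := h2 s _ hs'
    have e : c.ι.app s (C.map i x) = c.ι.app t x := congrArg (fun φ => φ.hom x) (c.w i)
    exact ⟨b.ι.app s y, by rw [← e, ← hy]; exact hG s y⟩

/-- directed system -/
abbrev Kd (J : Ideal R) (i : ℕ) (M : ModuleCat.{0} R) : ℕᵒᵖᵒᵖ ⥤ ModuleCat.{0} R :=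
  (localCohomology.ringModIdeals (localCohomology.idealPowersDiagram J)).op ⋙ EX i M

/-- cocone -/
def kc (J : Ideal R) (i : ℕ) (M : ModuleCat.{0} R) : Cocone (Kd J i M) :=
  ((evaluation _ _).obj M).mapCocone
    (colimit.cocone (localCohomology.diagram (localCohomology.idealPowersDiagram J) i))

/-- colimit -/
def kcIs (J : Ideal R) (i : ℕ) (M : ModuleCat.{0} R) : IsColimit (kc J i M) :=
  isColimitOfPreserves ((evaluation _ _).obj M) (colimit.isColimit _)

/-- local cohomology -/
abbrev LC (J : Ideal R) (i : ℕ) (M : ModuleCat.{0} R) : ModuleCat.{0} R := (kc J i M).pt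

lemma LC_eq (J : Ideal R) (i : ℕ) (M : ModuleCat.{0} R) :
  LC J i M = (localCohomology J i).obj M := rfl

/-- functoriality -/
def LCmap (J : Ideal R) (i : ℕ) {M N : ModuleCat.{0} R} (f : M ⟶ N) : LC J i M ⟶ LC J i N :=
  (kcIs J i M).map (kc J i N) (Functor.whiskerLeft _ ((Ext R (ModuleCat.{0} R) i).flip.map f))

lemma LCmap_ι (J : Ideal R) (i : ℕ) {M N : ModuleCat.{0} R} (f : M ⟶ N) (t)
    (x : (Kd J i M).obj t) : LCmap J i f ((kc J i M).ι.app t x) =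
      (kc J i N).ι.app t (((Ext R (ModuleCat.{0} R) i).flip.map f).app _ x) :=
  congrArg (fun φ => φ.hom x) ((kcIs J i M).ι_map (kc J i N) _ t)

lemma LCmap_smul (J : Ideal R) (i : ℕ) (M : ModuleCat.{0} R) (r : R) (x : LC J i M) :
    LCmap J i (r • 𝟙 M) x = r • x := by
  obtain ⟨t, x, rfl⟩ := colim_surj (kcIs J i M) x
  rw [LCmap_ι, ext_smul_right, map_smul]

lemma LCmap_add (J : Ideal R) (i : ℕ) {M N : ModuleCat.{0} R} (f g : M ⟶ N) (x : LC J i M) :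
    LCmap J i (f + g) x = LCmap J i f x + LCmap J i g x := by
  obtain ⟨t, x, rfl⟩ := colim_surj (kcIs J i M) x
  rw [LCmap_ι, LCmap_ι, LCmap_ι, ext_add, map_add]

lemma LCmap_comp (J : Ideal R) (i : ℕ) {M N P : ModuleCat.{0} R} (f : M ⟶ N) (g : N ⟶ P)
    (x : LC J i M) : LCmap J i (f ≫ g) x = LCmap J i g (LCmap J i f x) := by
  obtain ⟨t, x, rfl⟩ := colim_surj (kcIs J i M) x
  rw [LCmap_ι, LCmap_ι, LCmap_ι, Functor.map_comp]
  rfl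

lemma LC_torsion (J : Ideal R) (i : ℕ) (M : ModuleCat.{0} R) (x : LC J i M) :
    ∃ t : ℕ, ∀ r ∈ J ^ t, r • x = 0 := by
  obtain ⟨t, x, rfl⟩ := colim_surj (kcIs J i M) x
  refine ⟨t.unop.unop, fun r hr => ?_⟩
  rw [← map_smul, ext_smul_left, map_zero]
  change r • 𝟙 (ModuleCat.of R (R ⧸ J ^ t.unop.unop)) = 0
  ext
  change r • (Ideal.Quotient.mk (J ^ t.unop.unop) 1) = 0
  rw [← Ideal.Quotient.mk_eq_mk, ← Submodule.Quotient.mk_smul]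
  rw [Submodule.Quotient.mk_eq_zero]
  simpa using hr

lemma LC_shift (J : Ideal R) (i : ℕ) (S : ShortComplex (ModuleCat.{0} R)) (hS : S.ShortExact)
    (h : ∀ i, Subsingleton (LC J i S.X₂)) : Nonempty (LC J i S.X₃ ≃ₗ[R] LC J (i+1) S.X₁) :=
  colim_iso (kcIs J i S.X₂) (kcIs J i S.X₃) (kcIs J (i+1) S.X₁) (kcIs J (i+1) S.X₂)
    (Functor.whiskerLeft _ ((Ext R (ModuleCat.{0} R) i).flip.map S.g))
    (Functor.whiskerLeft _ (extDelta S hS i))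
    (Functor.whiskerLeft _ ((Ext R (ModuleCat.{0} R) (i+1)).flip.map S.f))
    (fun t x hx => extDelta_exact1 S hS i _ x hx)
    (fun t x hx => extDelta_exact2 S hS i _ x hx) (h i) (h (i+1))

end Colim
section Main
variable {R : Type} [CommRing R]

lemma mem_tors {J : Ideal R} {M : Type} [AddCommGroup M] [Module R M] {m : M} :
    m ∈ torsionSubmodule R J M ↔ ∃ k : ℕ, ∀ r ∈ J ^ k, r • m = 0 := by
  unfold torsionSubmodule
  rw [Submodule.mem_iSup_of_directed]
  · simp [Submodule.mem_torsionBySet_iff]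
  · apply Monotone.directed_le
    intro a b hab
    exact Submodule.torsionBySet_le_torsionBySet_of_subset (Ideal.pow_le_pow_right hab)

lemma tors_map_iff {J : Ideal R} {M N : Type} [AddCommGroup M] [Module R M] [AddCommGroup N]
    [Module R N] (g : M →ₗ[R] N) (hg : Function.Injective g) (m : M) :
    g m ∈ torsionSubmodule R J N ↔ m ∈ torsionSubmodule R J M := by
  simp only [mem_tors, ← map_smul, map_eq_zero_iff g hg]

/-- torsion transported along an equivalence -/
lemma tors_equiv (J : Ideal R) {M N : Type} [AddCommGroup M] [Module R M] [AddCommGroup N]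
    [Module R N] (e : M ≃ₗ[R] N) :
    Nonempty (torsionSubmodule R J M ≃ₗ[R] torsionSubmodule R J N) := by
  refine ⟨e.submoduleMap _ ≪≫ₗ LinearEquiv.ofEq _ _ ?_⟩
  ext n
  rw [Submodule.mem_map]
  constructor
  · rintro ⟨m, hm, rfl⟩
    exact (tors_map_iff (e : M →ₗ[R] N) e.injective m).2 hm
  · intro hn
    refine ⟨e.symm n, ?_, by simp⟩
    exact (tors_map_iff (e.symm : N →ₗ[R] M) e.symm.injective n).2 hn

lemma colim_inj {A B : ℕᵒᵖᵒᵖ ⥤ ModuleCat.{0} R} {b : Cocone B} (hb : IsColimit b)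
    (α : A ⟶ B) [∀ t, IsIso (α.app t)] (c : Cocone A)
    (hc : ∀ t (x : A.obj t), c.ι.app t x = 0 → x = 0) :
    ∃ g : b.pt →ₗ[R] c.pt, Function.Injective g ∧
      ∀ t x, g (b.ι.app t (α.app t x)) = c.ι.app t x := by
  have : IsIso α := NatIso.isIso_of_isIso_app α
  let c' : Cocone B := (Cocone.precompose (inv α)).obj c
  let G : b.pt ⟶ c.pt := hb.desc c'
  have hG : ∀ t x, G (b.ι.app t (α.app t x)) = c.ι.app t x := fun t x => by
    have h : α.app t ≫ b.ι.app t ≫ G = c.ι.app t := by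
      rw [hb.fac c' t]
      change α.app t ≫ (inv α).app t ≫ c.ι.app t = _
      rw [NatIso.isIso_inv_app, IsIso.hom_inv_id_assoc]
    exact congrArg (fun ψ => ψ.hom x) h
  refine ⟨G.hom, ?_, hG⟩
  rw [injective_iff_map_eq_zero]
  intro x hx
  obtain ⟨t, y, rfl⟩ := colim_surj hb x
  have hy : α.app t (inv (α.app t) y) = y :=
    congrArg (fun ψ => ψ.hom y) (IsIso.inv_hom_id (α.app t))
  rw [← hy] at hx ⊢
  have := hc t _ ((hG t _).symm.trans hx)
  rw [this, map_zero, map_zero]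

/-- diagram of Homs -/
abbrev Hd (J : Ideal R) (M : ModuleCat.{0} R) : ℕᵒᵖᵒᵖ ⥤ ModuleCat.{0} R :=
  (localCohomology.ringModIdeals (localCohomology.idealPowersDiagram J)).op ⋙
    (linearYoneda R (ModuleCat.{0} R)).obj M

/-- Hom to Ext zero -/
def hd0 (J : Ideal R) (M : ModuleCat.{0} R) : Hd J M ⟶ Kd J 0 M :=
  Functor.whiskerLeft _ (extZero M)

instance (J : Ideal R) (M : ModuleCat.{0} R) (t) : IsIso ((hd0 J M).app t) :=
  inferInstanceAs (IsIso ((extZero M).app _))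

/-- evaluation at one -/
def ev1 (K : Ideal R) (M : ModuleCat.{0} R) :
    ((linearYoneda R (ModuleCat.{0} R)).obj M).obj (op (ModuleCat.of R (R ⧸ K))) ⟶ M :=
  ModuleCat.ofHom
    { toFun := fun φ => (show ModuleCat.of R (R ⧸ K) ⟶ M from φ).hom (Submodule.Quotient.mk 1)
      map_add' := fun _ _ => rfl
      map_smul' := fun _ _ => rfl }

/-- evaluation cocone -/
def evc (J : Ideal R) (M : ModuleCat.{0} R) : Cocone (Hd J M) where
  pt := M
  ι :=
    { app := fun t => ev1 (J ^ t.unop.unop) M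
      naturality := fun s t f => rfl }

lemma LC_zero (J : Ideal R) (M : ModuleCat.{0} R) : ∃ g : LC J 0 M →ₗ[R] M,
    Function.Injective g ∧ LinearMap.range g = torsionSubmodule R J M := by
  obtain ⟨g, hg, hgt⟩ := colim_inj (kcIs J 0 M) (hd0 J M) (evc J M) (by
    intro t x hx
    change ModuleCat.of R (R ⧸ J ^ t.unop.unop) ⟶ M at x
    change x.hom (Submodule.Quotient.mk 1) = 0 at hx
    change x = 0
    ext
    exact hx)
  change LC J 0 M →ₗ[R] M at g
  refine ⟨g, hg, ?_⟩
  ext m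
  rw [mem_tors]
  constructor
  · rintro ⟨x, rfl⟩
    obtain ⟨t, ht⟩ := LC_torsion J 0 M x
    exact ⟨t, fun r hr => by rw [← map_smul, ht r hr, map_zero]⟩
  · rintro ⟨k, hk⟩
    let φ : ModuleCat.of R (R ⧸ J ^ k) ⟶ M := ModuleCat.ofHom
      (Submodule.liftQ (J ^ k) (LinearMap.toSpanSingleton R M m) (fun r hr => by
        exact hk r hr))
    refine ⟨(kc J 0 M).ι.app (op (op k)) ((hd0 J M).app (op (op k)) φ), ?_⟩
    refine (hgt (op (op k)) φ).trans ?_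
    change (1 : R) • m = m
    simp

lemma LC_sum (J : Ideal R) (i : ℕ) {M N : ModuleCat.{0} R} {ι : Type} (s : Finset ι)
    (f : ι → (M ⟶ N)) (x : LC J i M) (h : ∀ a ∈ s, LCmap J i (f a) x = 0) :
    LCmap J i (∑ a ∈ s, f a) x = 0 := by
  classical
  induction s using Finset.induction_on with
  | empty =>
    have h0 := LCmap_add J i (0 : M ⟶ N) 0 x
    rw [add_zero] at h0
    simpa using h0
  | insert a s ha ih =>
    rw [Finset.sum_insert ha, LCmap_add, h a (by simp), zero_add]
    exact ih fun b hb => h b (by simp [hb])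

/-- product of localizations -/
abbrev PL (s : Finset R) (M : ModuleCat.{0} R) : ModuleCat.{0} R :=
  ModuleCat.of R (∀ f : s, LocalizedModule (Submonoid.powers (f : R)) M)

lemma LC_PL (J : Ideal R) (i : ℕ) (s : Finset R) (hs : ∀ f ∈ s, f ∈ J) (M : ModuleCat.{0} R) :
    Subsingleton (LC J i (PL s M)) := by
  classical
  refine ⟨fun x y => ?_⟩
  suffices h : ∀ x : LC J i (PL s M), x = 0 by rw [h x, h y]
  intro x
  obtain ⟨t, ht⟩ := LC_torsion J i _ x
  let e : s → (PL s M ⟶ PL s M) := fun f => ModuleCat.ofHom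
    (LinearMap.single R _ f ∘ₗ LinearMap.proj f)
  have he : ∑ f ∈ Finset.univ, e f = 𝟙 (PL s M) := by
    apply ModuleCat.hom_ext
    rw [ModuleCat.hom_sum]
    apply LinearMap.ext
    intro v
    rw [LinearMap.sum_apply]
    exact LinearMap.sum_single_apply _ v
  have h1 : LCmap J i (𝟙 (PL s M)) x = x := by
    have := LCmap_smul J i (PL s M) 1 x
    rwa [one_smul, one_smul] at this
  rw [← h1, ← he]
  apply LC_sum
  intro f _
  have hu := IsLocalizedModule.map_units (S := Submonoid.powers (f : R))
    (LocalizedModule.mkLinearMap (Submonoid.powers (f : R)) M) ⟨(f : R) ^ t, (⟨t, rfl⟩ : (f : R) ^ t ∈ Submonoid.powers (f : R))⟩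
  obtain ⟨v, hv, -⟩ := isUnit_iff_exists.1 hu
  let u : PL s M ⟶ PL s M := ModuleCat.ofHom
    (LinearMap.single R _ f ∘ₗ v ∘ₗ LinearMap.proj f)
  have hfe : e f = ((f : R) ^ t • 𝟙 (PL s M)) ≫ u := by
    apply ModuleCat.hom_ext
    apply LinearMap.ext
    intro w
    have hvw : v ((f : R) ^ t • w f) = w f := by
      rw [map_smul]
      exact congrArg (fun φ => φ (w f)) hv
    exact congrArg (LinearMap.single R
      (fun f : s => LocalizedModule (Submonoid.powers (f : R)) M) f) hvw.symm
  rw [hfe, LCmap_comp, LCmap_smul, ht _ (Ideal.pow_mem_pow (hs f f.2) t), map_zero]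

lemma main_aux [IsNoetherianRing R] (I q : Ideal R) (hq : I ≤ q) (d : ℕ) :
    ∀ (M : ModuleCat.{0} R), (∀ j < d, Subsingleton (LC I j M)) →
      Nonempty (torsionSubmodule R q (LC I d M) ≃ₗ[R] LC q d M) := by
  induction d with
  | zero =>
    intro M _
    obtain ⟨g, hg, hgr⟩ := LC_zero I M
    obtain ⟨k, hk, hkr⟩ := LC_zero q M
    refine ⟨?_ ≪≫ₗ (LinearEquiv.ofInjective k hk).symm⟩
    refine Submodule.equivMapOfInjective g hg _ ≪≫ₗ LinearEquiv.ofEq _ _ ?_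
    rw [hkr]
    ext m
    constructor
    · rintro ⟨x, hx, rfl⟩
      exact (tors_map_iff g hg x).2 hx
    · intro hm
      have : m ∈ LinearMap.range g := by
        rw [hgr, mem_tors]
        obtain ⟨n, hn⟩ := mem_tors.1 hm
        exact ⟨n, fun r hr => hn r (Ideal.pow_right_mono hq n hr)⟩
      obtain ⟨x, rfl⟩ := this
      exact ⟨x, (tors_map_iff g hg x).1 hm, rfl⟩
  | succ d ih =>
    intro M hM
    obtain ⟨s, hs⟩ := (isNoetherianRing_iff_ideal_fg R).1 inferInstance I
    have hsI : ∀ f ∈ s, f ∈ I := fun f hf => hs ▸ Ideal.subset_span hf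
    let φ : M →ₗ[R] PL s M := LinearMap.pi fun f : s =>
      LocalizedModule.mkLinearMap (Submonoid.powers (f : R)) M
    have hφ : Function.Injective φ := by
      rw [injective_iff_map_eq_zero]
      intro m hm
      have hrad : I ≤ Ideal.radical (LinearMap.ker (LinearMap.toSpanSingleton R M m)) := by
        rw [← hs, Ideal.span_le]
        intro f hf
        have h1 : LocalizedModule.mkLinearMap (Submonoid.powers f) M m = 0 := congrFun hm ⟨f, hf⟩
        obtain ⟨⟨_, n, rfl⟩, hc⟩ := (IsLocalizedModule.eq_zero_iff (Submonoid.powers f) _).1 h1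
        exact ⟨n, hc⟩
      obtain ⟨n, hn⟩ := Ideal.exists_pow_le_of_le_radical_of_fg hrad
        ((isNoetherianRing_iff_ideal_fg R).1 inferInstance I)
      obtain ⟨g, hg, hgr⟩ := LC_zero I M
      have : m ∈ LinearMap.range g := by
        rw [hgr, mem_tors]
        exact ⟨n, fun r hr => hn hr⟩
      obtain ⟨x, rfl⟩ := this
      rw [(hM 0 (Nat.succ_pos d)).elim x 0, map_zero]
    let S : ShortComplex (ModuleCat.{0} R) :=
      ShortComplex.mk (ModuleCat.ofHom φ) (ModuleCat.ofHom (LinearMap.range φ).mkQ) (by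
        ext x
        exact (Submodule.Quotient.mk_eq_zero _).2 ⟨x, rfl⟩)
    have hS : S.ShortExact := by
      refine ShortComplex.ShortExact.mk' ?_ ?_ ?_
      · rw [ShortComplex.moduleCat_exact_iff]
        intro x hx
        exact (Submodule.Quotient.mk_eq_zero _).1 hx
      · exact (ModuleCat.mono_iff_injective _).2 hφ
      · exact (ModuleCat.epi_iff_surjective _).2 (Submodule.mkQ_surjective _)
    have shI := fun i => LC_shift I i S hS (fun i => LC_PL I i s hsI M)
    have shq := fun i => LC_shift q i S hS (fun i => LC_PL q i s (fun f hf => hq (hsI f hf)) M)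
    obtain ⟨e⟩ := ih S.X₃ (fun j hj => by
      obtain ⟨e⟩ := shI j
      have := hM (j + 1) (Nat.succ_lt_succ hj)
      exact e.toEquiv.subsingleton)
    obtain ⟨e1⟩ := shI d
    obtain ⟨e2⟩ := shq d
    obtain ⟨e3⟩ := tors_equiv q e1
    exact ⟨e3.symm ≪≫ₗ e ≪≫ₗ e2⟩

end Main
end LCproof

/-- `R` Noetherian, `I` an ideal with `H_I^j(R) = 0` for `j < d`, and `q` a
prime containing `I`.  Then `Γ_q(H_I^d(R)) ≅ H_q^d(R)`. -/
theorem stmt12 (R : Type) [CommRing R] [IsNoetherianRing R]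
    (I : Ideal R) (d : ℕ)
    (hvan : ∀ j < d, Subsingleton (LocalCohomologyMod R I j))
    (q : Ideal R) [q.IsPrime] (hq : I ≤ q) :
    Nonempty
      ((torsionSubmodule R q (LocalCohomologyMod R I d)) ≃ₗ[R] LocalCohomologyMod R q d) := 
  LCproof.main_aux I q hq d (ModuleCat.of R R) hvan

end
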